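/- For every x ∈ U, the first derivative of the squared mean curvature at t = 0 is ∂(H(t)²)/∂t |_{t=0} = −2 (f(x) + φ'(0)) − (2/n) Δf(x). -/

import Mathlib

open MeasureTheory Real Set
open scoped RealInnerProductSpace

noncomputable section

abbrev En (n : ℕ) : Type := EuclideanSpace ℝ (Fin n)

/-- Partial derivative of `F` in the `i`-th coordinate direction. -/
def pd {m : ℕ} {E : Type} [NormedAddCommGroup E] [NormedSpace ℝ E]
    (i : Fin m) (F : En m → E) (x : En m) : E :=
  fderiv ℝ F x (EuclideanSpace.single i 1)

/-- The induced (first fundamental form) metric of a map `Y : U → ℝ^{n+1}`. -/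
def gmet {n : ℕ} (Y : En n → En (n + 1)) (x : En n) : Matrix (Fin n) (Fin n) ℝ :=
  Matrix.of fun i j => ⟪pd i Y x, pd j Y x⟫

/-- The variation `X(t,x) = (1 + t f(x) + φ(t)) Φ(x)`. -/
def Xvar {n : ℕ} (f : En n → ℝ) (φ : ℝ → ℝ) (Φ : En n → En (n + 1)) (t : ℝ) (x : En n) :
    En (n + 1) :=
  (1 + t * f x + φ t) • Φ x

/-- Second fundamental form `h_{ij} = ⟨∂X/∂x_i, ∂N/∂x_j⟩`. -/
def sff {n : ℕ} (Y Nf : En n → En (n + 1)) (x : En n) : Matrix (Fin n) (Fin n) ℝ :=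
  Matrix.of fun i j => ⟪pd i Y x, pd j Nf x⟫

/-- Mean curvature `H = (1/n) Σ g^{ij} h_{ij}`. -/
def Hmean {n : ℕ} (Y Nf : En n → En (n + 1)) (x : En n) : ℝ :=
  (1 / (n : ℝ)) * ∑ i, ∑ j, (gmet Y x)⁻¹ i j * sff Y Nf x i j

/-- The volume element `√(det g)`. -/
def vElem {n : ℕ} (Y : En n → En (n + 1)) (x : En n) : ℝ :=
  Real.sqrt (gmet Y x).det

/-- `|∇u|² = Σ g^{ij} ∂_i u ∂_j u` with respect to the metric of `Φ`. -/
def gradSq {n : ℕ} (Φ : En n → En (n + 1)) (u : En n → ℝ) (x : En n) : ℝ :=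
  ∑ i, ∑ j, (gmet Φ x)⁻¹ i j * pd i u x * pd j u x

/-- Tangential gradient `∇u = Σ g^{ij} ∂_i u ∂_j Φ ∈ ℝ^{n+1}`. -/
def gradV {n : ℕ} (Φ : En n → En (n + 1)) (u : En n → ℝ) (x : En n) : En (n + 1) :=
  ∑ i, ∑ j, ((gmet Φ x)⁻¹ i j * pd i u x) • pd j Φ x

/-- Laplace–Beltrami operator `Δu = (1/√g) Σ ∂_i (√g g^{ij} ∂_j u)`. -/
def lapl {n : ℕ} (Φ : En n → En (n + 1)) (u : En n → ℝ) (x : En n) : ℝ :=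
  (vElem Φ x)⁻¹ * ∑ i, ∑ j, pd i (fun y => vElem Φ y * (gmet Φ y)⁻¹ i j * pd j u y) x

/-- Christoffel symbols of the metric of `Φ`. -/
def christoffel {n : ℕ} (Φ : En n → En (n + 1)) (k i j : Fin n) (x : En n) : ℝ :=
  (1 / 2) * ∑ l, (gmet Φ x)⁻¹ k l *
    (pd i (fun y => gmet Φ y l j) x + pd j (fun y => gmet Φ y l i) x
      - pd l (fun y => gmet Φ y i j) x)

/-- Hessian `(∇²u)_{ij} = ∂²u/∂x_i∂x_j − Σ_k Γ^k_{ij} ∂_k u`. -/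
def hess {n : ℕ} (Φ : En n → En (n + 1)) (u : En n → ℝ) (x : En n) (i j : Fin n) : ℝ :=
  pd i (fun y => pd j u y) x - ∑ k, christoffel Φ k i j x * pd k u x

/-- Jacobi's formula for the derivative of a determinant. -/
theorem HasFDerivAt.matrix_det {ι E : Type*} [Fintype ι] [DecidableEq ι]
    [NormedAddCommGroup E] [NormedSpace ℝ E] {M : E → Matrix ι ι ℝ} {M' : ι → ι → E →L[ℝ] ℝ}
    {x : E} (hM : ∀ i j, HasFDerivAt (fun y => M y i j) (M' i j) x) :
    HasFDerivAt (fun y => (M y).det) (∑ i, ∑ k, (M x).adjugate i k • M' k i) x := by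
  have h : HasFDerivAt (fun y => (M y).det) (∑ σ : Equiv.Perm ι, ((Equiv.Perm.sign σ : ℤ) : ℝ) •
      ∑ i, (∏ j ∈ Finset.univ.erase i, M x (σ j) j) • M' (σ i) i) x := by
    simp only [Matrix.det_apply']
    exact HasFDerivAt.fun_sum fun σ _ =>
      (HasFDerivAt.finsetProd fun i _ => hM (σ i) i).const_mul _
  convert! h using 1
  ext v
  simp only [sum_apply, smul_apply, smul_eq_mul,
    Finset.mul_sum]
  conv_rhs => rw [Finset.sum_comm]
  refine Finset.sum_congr rfl fun i _ => ?_
  have h1 : ∑ k, (M x).adjugate i k * M' k i v = ((M x).updateCol i fun k => M' k i v).det := by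
    rw [← Matrix.cramer_apply, Matrix.cramer_eq_adjugate_mulVec]
    rfl
  rw [h1, Matrix.det_apply']
  refine Finset.sum_congr rfl fun σ _ => ?_
  rw [← Finset.prod_erase_mul _ _ (Finset.mem_univ i)]
  congr 2
  · exact Finset.prod_congr rfl fun j hj => by simp [Finset.ne_of_mem_erase hj]
  · simp

theorem DifferentiableAt.matrix_inv_apply {ι E : Type*} [Fintype ι] [DecidableEq ι]
    [NormedAddCommGroup E] [NormedSpace ℝ E] {M : E → Matrix ι ι ℝ} {x : E}
    (hM : ∀ i j, DifferentiableAt ℝ (fun y => M y i j) x) (hdet : (M x).det ≠ 0) (i j : ι) :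
    DifferentiableAt ℝ (fun y => (M y)⁻¹ i j) x := by
  have hd : DifferentiableAt ℝ (fun y => (M y).det) x :=
    (HasFDerivAt.matrix_det fun i j => (hM i j).hasFDerivAt).differentiableAt
  have ha : DifferentiableAt ℝ (fun y => (M y).adjugate i j) x := by
    simp only [Matrix.adjugate_apply]
    refine (HasFDerivAt.matrix_det (M' := fun k l => fderiv ℝ
      (fun y => (M y).updateRow j (Pi.single i 1) k l) x) fun k l => ?_).differentiableAt
    refine DifferentiableAt.hasFDerivAt ?_
    by_cases hk : k = j
    · subst hk; simp
    · simpa [Matrix.updateRow_ne hk] using hM k l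
  simp only [Matrix.inv_def, Ring.inverse_eq_inv', Matrix.smul_apply, smul_eq_mul]
  exact (hd.inv hdet).mul ha

section PartialDerivatives

variable {m : ℕ} {E : Type} [NormedAddCommGroup E] [NormedSpace ℝ E]

theorem ContDiffAt.differentiableAt_pd {F : En m → E} {x : En m} (hF : ContDiffAt ℝ 2 F x)
    (i : Fin m) : DifferentiableAt ℝ (pd i F) x :=
  ((hF.fderiv_right (m := 1) (by norm_num)).differentiableAt one_ne_zero).clm_apply
    (differentiableAt_const _)

theorem fderiv_fderiv_apply_const {G : Type*} [NormedAddCommGroup G] [NormedSpace ℝ G]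
    {F : G → E} {x : G} (hF : ContDiffAt ℝ 2 F x) (v w : G) :
    fderiv ℝ (fun y => fderiv ℝ F y v) x w = fderiv ℝ (fderiv ℝ F) x w v := by
  have h : DifferentiableAt ℝ (fderiv ℝ F) x :=
    (hF.fderiv_right (m := 1) (by norm_num)).differentiableAt one_ne_zero
  rw [fderiv_clm_apply h (differentiableAt_const _)]
  simp

theorem ContDiffAt.pd_comm {F : En m → E} {x : En m} (hF : ContDiffAt ℝ 2 F x) (i j : Fin m) :
    pd i (pd j F) x = pd j (pd i F) x := by
  change fderiv ℝ (fun y => fderiv ℝ F y _) x _ = fderiv ℝ (fun y => fderiv ℝ F y _) x _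
  rw [fderiv_fderiv_apply_const hF, fderiv_fderiv_apply_const hF]
  exact (hF.isSymmSndFDerivAt (by simp)) _ _

theorem pd_inner {k : ℕ} {F G : En m → En k} {x : En m} (hF : DifferentiableAt ℝ F x)
    (hG : DifferentiableAt ℝ G x) (i : Fin m) :
    pd i (fun y => ⟪F y, G y⟫) x = ⟪F x, pd i G x⟫ + ⟪pd i F x, G x⟫ :=
  fderiv_inner_apply ℝ hF hG _

theorem pd_mul {u v : En m → ℝ} {x : En m} (hu : DifferentiableAt ℝ u x)
    (hv : DifferentiableAt ℝ v x) (i : Fin m) :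
    pd i (fun y => u y * v y) x = u x * pd i v x + v x * pd i u x := by
  simp [pd, fderiv_fun_mul hu hv]

theorem pd_smul {u : En m → ℝ} {F : En m → E} {x : En m} (hu : DifferentiableAt ℝ u x)
    (hF : DifferentiableAt ℝ F x) (i : Fin m) :
    pd i (fun y => u y • F y) x = u x • pd i F x + pd i u x • F x := by
  simp [pd, fderiv_fun_smul hu hF]

theorem pd_sum {ι : Type*} {s : Finset ι} {F : ι → En m → E} {x : En m}
    (hF : ∀ k ∈ s, DifferentiableAt ℝ (F k) x) (i : Fin m) :
    pd i (fun y => ∑ k ∈ s, F k y) x = ∑ k ∈ s, pd i (F k) x := by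
  simp [pd, fderiv_fun_sum hF]

end PartialDerivatives

section Metric

variable {n : ℕ} {Φ : En n → En (n + 1)} {x : En n}

theorem gmet_symm (i j : Fin n) : gmet Φ x i j = gmet Φ x j i :=
  real_inner_comm (pd j Φ x) (pd i Φ x)

theorem gmet_inv_symm (i j : Fin n) : (gmet Φ x)⁻¹ i j = (gmet Φ x)⁻¹ j i := by
  have h : (gmet Φ x).transpose = gmet Φ x := Matrix.ext fun i j => gmet_symm j i
  conv_lhs => rw [← h, ← Matrix.transpose_nonsing_inv]
  rfl

theorem sum_gmet_inv_mul_gmet (hdet : (gmet Φ x).det ≠ 0) (i k : Fin n) :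
    ∑ j, (gmet Φ x)⁻¹ i j * gmet Φ x j k = if i = k then 1 else 0 := by
  rw [← Matrix.mul_apply, Matrix.nonsing_inv_mul _ hdet.isUnit, Matrix.one_apply]

theorem differentiableAt_gmet (hΦ : ContDiffAt ℝ 2 Φ x) (i j : Fin n) :
    DifferentiableAt ℝ (fun y => gmet Φ y i j) x :=
  (hΦ.differentiableAt_pd i).inner ℝ (hΦ.differentiableAt_pd j)

theorem pd_gmet (hΦ : ContDiffAt ℝ 2 Φ x) (k i j : Fin n) :
    pd k (fun y => gmet Φ y i j) x = ⟪pd i Φ x, pd k (pd j Φ) x⟫ + ⟪pd k (pd i Φ) x, pd j Φ x⟫ :=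
  pd_inner (hΦ.differentiableAt_pd i) (hΦ.differentiableAt_pd j) k

theorem differentiableAt_vElem (hΦ : ContDiffAt ℝ 2 Φ x) (hdet : 0 < (gmet Φ x).det) :
    DifferentiableAt ℝ (vElem Φ) x :=
  (HasFDerivAt.matrix_det fun i j =>
    (differentiableAt_gmet hΦ i j).hasFDerivAt).differentiableAt.sqrt hdet.ne'

theorem pd_vElem (hΦ : ContDiffAt ℝ 2 Φ x) (hdet : 0 < (gmet Φ x).det) (k : Fin n) :
    pd k (vElem Φ) x =
      vElem Φ x * ∑ i, ∑ j, (gmet Φ x)⁻¹ i j * ⟪pd i Φ x, pd k (pd j Φ) x⟫ := by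
  have h := (HasFDerivAt.matrix_det fun i j =>
    (differentiableAt_gmet hΦ i j).hasFDerivAt).sqrt hdet.ne'
  have hadj (i j : Fin n) :
      (gmet Φ x).adjugate i j = (vElem Φ x * vElem Φ x) * (gmet Φ x)⁻¹ i j := by
    rw [vElem, Real.mul_self_sqrt hdet.le]
    simp [Matrix.inv_def, hdet.ne']
  have hv : vElem Φ x ≠ 0 := (Real.sqrt_pos.2 hdet).ne'
  have hsum : ∑ i, ∑ j, (gmet Φ x)⁻¹ i j * pd k (fun y => gmet Φ y j i) x
      = 2 * ∑ i, ∑ j, (gmet Φ x)⁻¹ i j * ⟪pd i Φ x, pd k (pd j Φ) x⟫ := by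
    simp only [pd_gmet hΦ, mul_add, Finset.sum_add_distrib, two_mul]
    congr 1
    · rw [Finset.sum_comm]
      exact Finset.sum_congr rfl fun i _ => Finset.sum_congr rfl fun j _ => by
        rw [gmet_inv_symm]
    · simp only [real_inner_comm]
  change fderiv ℝ (fun y => √(gmet Φ y).det) x _ = _
  rw [h.fderiv]
  change (1 / (2 * vElem Φ x)) • ((∑ i, ∑ j, (gmet Φ x).adjugate i j •
    fderiv ℝ (fun y => gmet Φ y j i) x : En n →L[ℝ] ℝ) (EuclideanSpace.single k 1)) = _
  simp only [sum_apply, smul_apply, smul_eq_mul, hadj,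
    mul_assoc, ← Finset.mul_sum]
  change 1 / (2 * vElem Φ x) * (vElem Φ x * (vElem Φ x * ∑ i, ∑ j, (gmet Φ x)⁻¹ i j *
    pd k (fun y => gmet Φ y j i) x)) = _
  rw [hsum]
  field_simp

/-- The divergence of a tangent field computed intrinsically and as a tangential trace. -/
theorem sum_pd_vElem_mul (hΦ : ContDiffAt ℝ 2 Φ x) (hdet : 0 < (gmet Φ x).det)
    {V : Fin n → En n → ℝ} (hV : ∀ i, DifferentiableAt ℝ (V i) x) :
    ∑ i, pd i (fun y => vElem Φ y * V i y) x =
      vElem Φ x * ∑ i, ∑ j, (gmet Φ x)⁻¹ i j *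
        ⟪pd i Φ x, pd j (fun y => ∑ k, V k y • pd k Φ y) x⟫ := by
  have hpd (j : Fin n) : pd j (fun y => ∑ k, V k y • pd k Φ y) x =
      ∑ k, (V k x • pd j (pd k Φ) x + pd j (V k) x • pd k Φ x) := by
    rw [pd_sum fun k _ => (hV k).fun_smul (hΦ.differentiableAt_pd k)]
    exact Finset.sum_congr rfl fun k _ => pd_smul (hV k) (hΦ.differentiableAt_pd k) j
  have htr : ∑ i, ∑ j, ∑ k, (gmet Φ x)⁻¹ i j * (pd j (V k) x * gmet Φ x i k)
      = ∑ k, pd k (V k) x := by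
    have hk (j k : Fin n) : ∑ i, (gmet Φ x)⁻¹ i j * (pd j (V k) x * gmet Φ x i k)
        = if j = k then pd j (V k) x else 0 := by
      have := sum_gmet_inv_mul_gmet hdet.ne' j k
      calc _ = pd j (V k) x * ∑ i, (gmet Φ x)⁻¹ j i * gmet Φ x i k := by
            rw [Finset.mul_sum]
            exact Finset.sum_congr rfl fun i _ => by rw [gmet_inv_symm i j]; ring
        _ = _ := by rw [this]; simp
    rw [Finset.sum_comm]
    refine Finset.sum_congr rfl fun j _ => ?_
    rw [Finset.sum_comm]
    simp [hk]
  simp only [hpd, inner_sum, inner_add_right, inner_smul_right, Finset.mul_sum, mul_add,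
    Finset.sum_add_distrib]
  rw [Finset.sum_congr rfl fun i _ => pd_mul (differentiableAt_vElem hΦ hdet) (hV i) i]
  simp only [pd_vElem hΦ hdet, Finset.sum_add_distrib, ← Finset.mul_sum]
  rw [add_comm]
  congr 1
  · simp only [Finset.mul_sum]
    rw [Finset.sum_comm]
    refine Finset.sum_congr rfl fun i _ => ?_
    rw [Finset.sum_comm]
    refine Finset.sum_congr rfl fun j _ => Finset.sum_congr rfl fun k _ => ?_
    rw [hΦ.pd_comm k j]
    ring
  · rw [← htr]
    simp only [Finset.mul_sum]
    rfl

theorem lapl_eq_trace_pd_gradV {f : En n → ℝ} (hΦ : ContDiffAt ℝ 2 Φ x) (hf : ContDiffAt ℝ 2 f x)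
    (hdet : 0 < (gmet Φ x).det) :
    lapl Φ f x = ∑ i, ∑ j, (gmet Φ x)⁻¹ i j * ⟪pd i Φ x, pd j (gradV Φ f) x⟫ := by
  have hinv (i j : Fin n) : DifferentiableAt ℝ (fun y => (gmet Φ y)⁻¹ i j) x :=
    DifferentiableAt.matrix_inv_apply (differentiableAt_gmet hΦ) hdet.ne' i j
  have hterm (i j : Fin n) : DifferentiableAt ℝ (fun y => (gmet Φ y)⁻¹ i j * pd j f y) x :=
    (hinv i j).mul (hf.differentiableAt_pd j)
  have hgrad : gradV Φ f =
      fun y => ∑ k, (∑ l, (gmet Φ y)⁻¹ k l * pd l f y) • pd k Φ y := by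
    funext y
    simp only [gradV, Finset.sum_smul]
    rw [Finset.sum_comm]
    exact Finset.sum_congr rfl fun i _ => Finset.sum_congr rfl fun j _ => by
      rw [gmet_inv_symm]
  have hv : vElem Φ x ≠ 0 := (Real.sqrt_pos.2 hdet).ne'
  rw [lapl, hgrad, inv_mul_eq_iff_eq_mul₀ hv,
    ← sum_pd_vElem_mul hΦ hdet fun i => DifferentiableAt.fun_sum fun j _ => hterm i j]
  refine Finset.sum_congr rfl fun i _ => ?_
  simp only [Finset.mul_sum]
  rw [pd_sum fun j _ => (differentiableAt_vElem hΦ hdet).fun_mul (hterm i j)]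
  simp only [mul_assoc]

end Metric

/-- A linearly independent family of `n` vectors of `ℝ^{n+1}`, together with a nonzero vector
orthogonal to all of them, has trivial orthogonal complement. -/
theorem eq_zero_of_inner_eq_zero_of_linearIndependent {n : ℕ} {v : Fin n → En (n + 1)}
    {w a : En (n + 1)} (hv : LinearIndependent ℝ v) (hw : w ≠ 0) (hwv : ∀ i, ⟪w, v i⟫ = 0)
    (haw : ⟪a, w⟫ = 0) (hav : ∀ i, ⟪a, v i⟫ = 0) : a = 0 := by
  have hmem : w ∉ Submodule.span ℝ (Set.range v) := by
    intro h
    have hle : Submodule.span ℝ (Set.range v) ≤ (innerₛₗ ℝ w).ker :=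
      Submodule.span_le.2 (by rintro _ ⟨i, rfl⟩; exact hwv i)
    exact hw (inner_self_eq_zero.1 (hle h))
  have htop : Submodule.span ℝ (Set.range (Fin.cons w v : Fin (n + 1) → En (n + 1))) = ⊤ :=
    (linearIndependent_finCons.2 ⟨hv, hmem⟩).span_eq_top_of_card_eq_finrank (by simp)
  have hle : Submodule.span ℝ (Set.range (Fin.cons w v : Fin (n + 1) → En (n + 1))) ≤
      (innerₛₗ ℝ a).ker :=
    Submodule.span_le.2 (by
      rintro _ ⟨i, rfl⟩
      refine Fin.cases ?_ (fun i => ?_) i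
      · exact haw
      · exact hav i)
  rw [htop] at hle
  exact inner_self_eq_zero.1 (hle (Submodule.mem_top (x := a)))

theorem hasDerivAt_matrix_inv_apply_of_smul {ι : Type*} [Fintype ι] [DecidableEq ι]
    {M : ℝ → Matrix ι ι ℝ} {t a : ℝ} (hM : ∀ i j, HasDerivAt (fun s => M s i j) (a * M t i j) t)
    (hdet : (M t).det ≠ 0) (i j : ι) :
    HasDerivAt (fun s => (M s)⁻¹ i j) (-a * (M t)⁻¹ i j) t := by
  have hinv (i j : ι) : DifferentiableAt ℝ (fun s => (M s)⁻¹ i j) t :=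
    DifferentiableAt.matrix_inv_apply (fun i j => (hM i j).differentiableAt) hdet i j
  have hne : ∀ᶠ s in nhds t, (M s).det ≠ 0 :=
    (HasFDerivAt.matrix_det fun i j =>
      (hM i j).differentiableAt.hasFDerivAt).continuousAt.eventually_ne hdet
  let K' : Matrix ι ι ℝ := Matrix.of fun i j => deriv (fun s => (M s)⁻¹ i j) t
  have hK : K' * M t = (-a) • 1 := by
    ext i j
    have h1 : HasDerivAt (fun s => ∑ k, (M s)⁻¹ i k * M s k j)
        (∑ k, (K' i k * M t k j + (M t)⁻¹ i k * (a * M t k j))) t :=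
      HasDerivAt.fun_sum fun k _ => (hinv i k).hasDerivAt.fun_mul (hM k j)
    have h2 : (fun s => ∑ k, (M s)⁻¹ i k * M s k j) =ᶠ[nhds t]
        fun _ => (1 : Matrix ι ι ℝ) i j := by
      filter_upwards [hne] with s hs
      rw [← Matrix.mul_apply, Matrix.nonsing_inv_mul _ hs.isUnit]
    have h3 := h1.unique ((hasDerivAt_const t _).congr_of_eventuallyEq h2)
    have h4 : ∑ k, (M t)⁻¹ i k * M t k j = (1 : Matrix ι ι ℝ) i j := h2.self_of_nhds
    rw [Finset.sum_add_distrib] at h3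
    simp only [mul_left_comm _ a, ← Finset.mul_sum, h4] at h3
    rw [Matrix.mul_apply, Matrix.smul_apply, smul_eq_mul]
    linarith
  have hK' : K' = (-a) • (M t)⁻¹ := by
    rw [← Matrix.mul_nonsing_inv_cancel_right (M t) K' hdet.isUnit, hK, Matrix.smul_mul, one_mul]
  have h := (hinv i j).hasDerivAt
  rwa [show deriv (fun s => (M s)⁻¹ i j) t = -a * (M t)⁻¹ i j from congrFun₂ hK' i j] at h

section TimeDependent

variable {n : ℕ} {E : Type} [NormedAddCommGroup E] [NormedSpace ℝ E] {N : ℝ → En n → E}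
  {t : ℝ} {x : En n}

theorem hasDerivAt_time (h : DifferentiableAt ℝ (fun p : ℝ × En n => N p.1 p.2) (t, x)) :
    HasDerivAt (fun s => N s x) (fderiv ℝ (fun p : ℝ × En n => N p.1 p.2) (t, x) (1, 0)) t :=
  h.hasFDerivAt.comp_hasDerivAt_of_eq t ((hasDerivAt_id t).prodMk (hasDerivAt_const t x)) rfl

theorem pd_time_slice (h : DifferentiableAt ℝ (fun p : ℝ × En n => N p.1 p.2) (t, x))
    (j : Fin n) :
    pd j (N t) x =
      fderiv ℝ (fun p : ℝ × En n => N p.1 p.2) (t, x) (0, EuclideanSpace.single j 1) := by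
  have := h.hasFDerivAt.comp x ((hasFDerivAt_const t x).prodMk (hasFDerivAt_id x))
  change fderiv ℝ (N t) x _ = _
  rw [show N t = (fun p : ℝ × En n => N p.1 p.2) ∘ Prod.mk t from rfl, this.fderiv]
  simp

/-- Time and space derivatives commute. -/
theorem hasDerivAt_pd_time (h : ContDiffAt ℝ 2 (fun p : ℝ × En n => N p.1 p.2) (t, x))
    (j : Fin n) :
    HasDerivAt (fun s => pd j (N s) x) (pd j (fun y => deriv (fun s => N s y) t) x) t := by
  set F := fun p : ℝ × En n => N p.1 p.2
  have hev : ∀ᶠ p in nhds (t, x), DifferentiableAt ℝ F p :=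
    (h.eventually (by simp)).mono fun p hp => hp.differentiableAt two_ne_zero
  have hdF (v : ℝ × En n) : DifferentiableAt ℝ (fun p => fderiv ℝ F p v) (t, x) :=
    ((h.fderiv_right (m := 1) (by norm_num)).differentiableAt one_ne_zero).clm_apply
      (differentiableAt_const _)
  have hslice : (fun s => pd j (N s) x) =ᶠ[nhds t]
      fun s => fderiv ℝ F (s, x) (0, EuclideanSpace.single j 1) := by
    have hc : ContinuousAt (fun s : ℝ => (s, x)) t := by fun_prop
    filter_upwards [hc.eventually hev] with s hs using pd_time_slice hs j
  have hspace : (fun y => deriv (fun s => N s y) t) =ᶠ[nhds x]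
      fun y => fderiv ℝ F (t, y) (1, 0) := by
    have hc : ContinuousAt (fun y : En n => (t, y)) x := by fun_prop
    filter_upwards [hc.eventually hev] with y hy using (hasDerivAt_time hy).deriv
  have hval : pd j (fun y => deriv (fun s => N s y) t) x =
      fderiv ℝ (fun p => fderiv ℝ F p (0, EuclideanSpace.single j 1)) (t, x) (1, 0) := by
    rw [pd, hspace.fderiv_eq]
    change pd j ((fun s y => fderiv ℝ F (s, y) (1, 0)) t) x = _
    rw [pd_time_slice (N := fun s y => fderiv ℝ F (s, y) (1, 0)) (hdF (1, 0))]
    change fderiv ℝ (fun p => fderiv ℝ F p (1, 0)) (t, x) _ = _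
    rw [fderiv_fderiv_apply_const h, fderiv_fderiv_apply_const h]
    exact h.isSymmSndFDerivAt (by simp) _ _
  rw [hval]
  exact (hasDerivAt_time (N := fun s y => fderiv ℝ F (s, y) (0, EuclideanSpace.single j 1))
    (hdF _)).congr_of_eventuallyEq hslice

end TimeDependent

section Variation

variable {n : ℕ} {Φ : En n → En (n + 1)} {f : En n → ℝ} {φ : ℝ → ℝ} {x : En n}

theorem pd_Xvar (hΦ : DifferentiableAt ℝ Φ x) (hf : DifferentiableAt ℝ f x) (t : ℝ) (i : Fin n) :
    pd i (Xvar f φ Φ t) x = (1 + t * f x + φ t) • pd i Φ x + (t * pd i f x) • Φ x := by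
  have hu : DifferentiableAt ℝ (fun y => 1 + t * f y + φ t) x := by fun_prop
  have hpd : pd i (fun y => 1 + t * f y + φ t) x = t * pd i f x := by
    simp [pd, fderiv_const_mul hf]
  rw [← hpd]
  exact pd_smul hu hΦ i

theorem pd_Xvar_zero (hΦ : DifferentiableAt ℝ Φ x) (hf : DifferentiableAt ℝ f x) (hφ0 : φ 0 = 0)
    (i : Fin n) : pd i (Xvar f φ Φ 0) x = pd i Φ x := by
  simp [pd_Xvar hΦ hf, hφ0]

theorem hasDerivAt_pd_Xvar (hΦ : DifferentiableAt ℝ Φ x) (hf : DifferentiableAt ℝ f x)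
    (hφ : DifferentiableAt ℝ φ 0) (i : Fin n) :
    HasDerivAt (fun t => pd i (Xvar f φ Φ t) x)
      ((f x + deriv φ 0) • pd i Φ x + pd i f x • Φ x) 0 := by
  simp only [pd_Xvar hΦ hf]
  have h1 : HasDerivAt (fun t : ℝ => 1 + t * f x + φ t) (f x + deriv φ 0) 0 := by
    simpa using (((hasDerivAt_id (0 : ℝ)).mul_const (f x)).const_add 1).fun_add hφ.hasDerivAt
  have h2 : HasDerivAt (fun t : ℝ => t * pd i f x) (pd i f x) 0 := by
    simpa using (hasDerivAt_id (0 : ℝ)).mul_const (pd i f x)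
  exact (h1.smul_const _).add (h2.smul_const _)

theorem inner_gradV_pd (hdet : (gmet Φ x).det ≠ 0) (k : Fin n) :
    ⟪gradV Φ f x, pd k Φ x⟫ = pd k f x := by
  simp only [gradV, sum_inner, real_inner_smul_left]
  have h (i : Fin n) : ∑ j, (gmet Φ x)⁻¹ i j * pd i f x * ⟪pd j Φ x, pd k Φ x⟫
      = if i = k then pd i f x else 0 := by
    calc _ = pd i f x * ∑ j, (gmet Φ x)⁻¹ i j * gmet Φ x j k := by
          rw [Finset.mul_sum]
          exact Finset.sum_congr rfl fun j _ => by rw [gmet, Matrix.of_apply]; ring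
      _ = _ := by rw [sum_gmet_inv_mul_gmet hdet]; simp
  simp [h]

theorem inner_gradV_of_orthogonal {w : En (n + 1)} (hw : ∀ i, ⟪w, pd i Φ x⟫ = 0) :
    ⟪gradV Φ f x, w⟫ = 0 := by
  rw [real_inner_comm]
  simp [gradV, inner_sum, real_inner_smul_right, hw]

theorem linearIndependent_pd (h : (gmet Φ x).PosDef) :
    LinearIndependent ℝ fun i => pd i Φ x :=
  Matrix.posDef_gram_iff_linearIndependent.1 h

/-- The normal variation is minus the tangential gradient. -/
theorem hasDerivAt_normal_eq_neg_gradV {N : ℝ → En (n + 1)} {N' : En (n + 1)}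
    (hΦ : DifferentiableAt ℝ Φ x) (hf : DifferentiableAt ℝ f x) (hφ : DifferentiableAt ℝ φ 0)
    (hφ0 : φ 0 = 0) (hnorm : ‖Φ x‖ = 1) (hpos : (gmet Φ x).PosDef) (hN : HasDerivAt N N' 0)
    (hunit : ∀ᶠ t in nhds 0, ‖N t‖ = 1)
    (horth : ∀ᶠ t in nhds 0, ∀ i, ⟪N t, pd i (Xvar f φ Φ t) x⟫ = 0) (hN0 : N 0 = Φ x) :
    N' = -gradV Φ f x := by
  have hdet : (gmet Φ x).det ≠ 0 := hpos.det_pos.ne'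
  have hΦpd (i : Fin n) : ⟪Φ x, pd i Φ x⟫ = 0 := by
    simpa [hN0, pd_Xvar_zero hΦ hf hφ0] using horth.self_of_nhds i
  have hΦΦ : ⟪Φ x, Φ x⟫ = 1 := by rw [real_inner_self_eq_norm_sq, hnorm, one_pow]
  have hN'pd (i : Fin n) : ⟪N', pd i Φ x⟫ = -pd i f x := by
    have h1 := hN.inner ℝ (hasDerivAt_pd_Xvar hΦ hf hφ i)
    have h2 : (fun t => ⟪N t, pd i (Xvar f φ Φ t) x⟫) =ᶠ[nhds 0] fun _ => (0 : ℝ) :=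
      horth.mono fun t ht => ht i
    have h3 := h1.unique ((hasDerivAt_const (0 : ℝ) (0 : ℝ)).congr_of_eventuallyEq h2)
    simp only [hN0, pd_Xvar_zero hΦ hf hφ0, inner_add_right, real_inner_smul_right, hΦpd,
      hΦΦ] at h3
    linarith
  have hN'Φ : ⟪N', Φ x⟫ = 0 := by
    have h2 : (fun t => ⟪N t, N t⟫) =ᶠ[nhds 0] fun _ => (1 : ℝ) :=
      hunit.mono fun t ht => by
        change ⟪N t, N t⟫ = 1
        rw [real_inner_self_eq_norm_sq, ht, one_pow]
    have h3 := (hN.inner ℝ hN).unique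
      ((hasDerivAt_const (0 : ℝ) (1 : ℝ)).congr_of_eventuallyEq h2)
    rw [hN0, real_inner_comm] at h3
    linarith
  refine eq_neg_of_add_eq_zero_left (eq_zero_of_inner_eq_zero_of_linearIndependent
    (linearIndependent_pd hpos) (norm_ne_zero_iff.1 (by simp [hnorm])) hΦpd ?_ fun i => ?_)
  · rw [inner_add_left, hN'Φ, inner_gradV_of_orthogonal hΦpd, add_zero]
  · rw [inner_add_left, hN'pd, inner_gradV_pd hdet, neg_add_cancel]

theorem sum_gmet_inv_mul_gmet_eq_card (hdet : (gmet Φ x).det ≠ 0) :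
    ∑ i, ∑ j, (gmet Φ x)⁻¹ i j * gmet Φ x i j = n := by
  have h (i : Fin n) : ∑ j, (gmet Φ x)⁻¹ i j * gmet Φ x i j = 1 := by
    simp only [gmet_symm (Φ := Φ) (x := x) i]
    simpa using sum_gmet_inv_mul_gmet hdet i i
  simp [h]

end Variation

/-- `∂(H²)/∂t |_(t=0) = −2 (f + φ'(0)) − (2/n) Δf`. -/
theorem first_variation_mean_curvature_sq {n : ℕ} (hn : 1 ≤ n) (U : Set (En n)) (hU : IsOpen U)
    (Φ : En n → En (n + 1)) (f : En n → ℝ) (φ : ℝ → ℝ) (ε : ℝ) (hε : 0 < ε)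
    (hΦ : ContDiffOn ℝ (⊤ : ℕ∞) Φ U) (hf : ContDiffOn ℝ (⊤ : ℕ∞) f U)
    (hφ : ContDiffOn ℝ (⊤ : ℕ∞) φ (Ioo (-ε) ε)) (hφ0 : φ 0 = 0)
    (hsph : ∀ x ∈ U, ‖Φ x‖ = 1)
    (himm : ∀ x ∈ U, (gmet Φ x).PosDef)
    (N : ℝ → En n → En (n + 1))
    (hNsm : ContDiffOn ℝ (⊤ : ℕ∞) (fun p : ℝ × En n => N p.1 p.2) (Ioo (-ε) ε ×ˢ U))
    (hNunit : ∀ t ∈ Ioo (-ε) ε, ∀ x ∈ U, ‖N t x‖ = 1)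
    (hNorth : ∀ t ∈ Ioo (-ε) ε, ∀ x ∈ U, ∀ i : Fin n, ⟪N t x, pd i (Xvar f φ Φ t) x⟫ = 0)
    (hN0 : ∀ x ∈ U, N 0 x = Φ x) :
    ∀ x ∈ U,
      deriv (fun t => (Hmean (Xvar f φ Φ t) (N t) x) ^ 2) 0
        = -2 * (f x + deriv φ 0) - (2 / (n : ℝ)) * lapl Φ f x := by
  intro x hx
  have h0 : (0 : ℝ) ∈ Ioo (-ε) ε := ⟨by linarith, hε⟩
  have hn0 : (n : ℝ) ≠ 0 := by exact_mod_cast (by lia : n ≠ 0)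
  have hI : Ioo (-ε) ε ∈ nhds (0 : ℝ) := Ioo_mem_nhds h0.1 h0.2
  have hle : (2 : WithTop ℕ∞) ≤ ((⊤ : ℕ∞) : WithTop ℕ∞) := WithTop.coe_le_coe.2 le_top
  have hΦ2 (y : En n) (hy : y ∈ U) : ContDiffAt ℝ 2 Φ y :=
    (hΦ.contDiffAt (hU.mem_nhds hy)).of_le hle
  have hf2 (y : En n) (hy : y ∈ U) : ContDiffAt ℝ 2 f y :=
    (hf.contDiffAt (hU.mem_nhds hy)).of_le hle
  have hΦ1 (y : En n) (hy : y ∈ U) := (hΦ2 y hy).differentiableAt two_ne_zero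
  have hf1 (y : En n) (hy : y ∈ U) := (hf2 y hy).differentiableAt two_ne_zero
  have hφ1 : DifferentiableAt ℝ φ 0 :=
    ((hφ.contDiffAt hI).of_le hle).differentiableAt two_ne_zero
  have hN2 (y : En n) (hy : y ∈ U) :
      ContDiffAt ℝ 2 (fun p : ℝ × En n => N p.1 p.2) (0, y) :=
    (hNsm.contDiffAt (prod_mem_nhds hI (hU.mem_nhds hy))).of_le hle
  have hN' (y : En n) (hy : y ∈ U) : deriv (fun s => N s y) 0 = -gradV Φ f y :=
    hasDerivAt_normal_eq_neg_gradV (hΦ1 y hy) (hf1 y hy) hφ1 hφ0 (hsph y hy) (himm y hy)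
      (hasDerivAt_time ((hN2 y hy).differentiableAt two_ne_zero)).differentiableAt.hasDerivAt
      (Filter.mem_of_superset hI fun t ht => hNunit t ht y hy)
      (Filter.mem_of_superset hI fun t ht => hNorth t ht y hy) (hN0 y hy)
  have hdet : 0 < (gmet Φ x).det := (himm x hx).det_pos
  have hΦpd (i : Fin n) : ⟪Φ x, pd i Φ x⟫ = 0 := by
    simpa [hN0 x hx, pd_Xvar_zero (hΦ1 x hx) (hf1 x hx) hφ0] using hNorth 0 h0 x hx i
  have hΦpd' (i : Fin n) : ⟪pd i Φ x, Φ x⟫ = 0 := by rw [real_inner_comm, hΦpd]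
  set c : ℝ := f x + deriv φ 0
  have hX (i : Fin n) := hasDerivAt_pd_Xvar (hΦ1 x hx) (hf1 x hx) hφ1 i
  have hX0 (i : Fin n) := pd_Xvar_zero (hΦ1 x hx) (hf1 x hx) hφ0 i
  have hNpd0 (j : Fin n) : pd j (N 0) x = pd j Φ x := by
    have h : N 0 =ᶠ[nhds x] Φ := Filter.mem_of_superset (hU.mem_nhds hx) hN0
    rw [pd, h.fderiv_eq, pd]
  have hNpd (j : Fin n) :
      HasDerivAt (fun t => pd j (N t) x) (-pd j (gradV Φ f) x) 0 := by
    have h : (fun y => deriv (fun s => N s y) 0) =ᶠ[nhds x] -gradV Φ f :=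
      Filter.mem_of_superset (hU.mem_nhds hx) hN'
    have h1 := hasDerivAt_pd_time (hN2 x hx) j
    rwa [show pd j (fun y => deriv (fun s => N s y) 0) x = -pd j (gradV Φ f) x by
      rw [pd, h.fderiv_eq, fderiv_neg]; rfl] at h1
  have hg0 : gmet (Xvar f φ Φ 0) x = gmet Φ x := by
    ext i j
    simp [gmet, hX0]
  have hh0 : sff (Xvar f φ Φ 0) (N 0) x = gmet Φ x := by
    ext i j
    simp [gmet, sff, hX0, hNpd0]
  have hg (i j : Fin n) : HasDerivAt (fun t => gmet (Xvar f φ Φ t) x i j)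
      (2 * c * gmet (Xvar f φ Φ 0) x i j) 0 := by
    have h := (hX i).inner ℝ (hX j)
    rw [hg0]
    convert! h using 1
    simp only [hX0, inner_add_left, inner_add_right, real_inner_smul_left, real_inner_smul_right,
      hΦpd, hΦpd', gmet, Matrix.of_apply]
    ring
  have hginv (i j : Fin n) : HasDerivAt (fun t => (gmet (Xvar f φ Φ t) x)⁻¹ i j)
      (-(2 * c) * (gmet Φ x)⁻¹ i j) 0 := by
    have h := hasDerivAt_matrix_inv_apply_of_smul hg (by rw [hg0]; exact hdet.ne') i j
    rwa [hg0] at h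
  have hh (i j : Fin n) : HasDerivAt (fun t => sff (Xvar f φ Φ t) (N t) x i j)
      (c * gmet Φ x i j - ⟪pd i Φ x, pd j (gradV Φ f) x⟫) 0 := by
    have h := (hX i).inner ℝ (hNpd j)
    convert! h using 1
    simp only [hX0, hNpd0, inner_add_left, inner_neg_right, real_inner_smul_left, hΦpd, gmet,
      Matrix.of_apply]
    ring
  have hH : HasDerivAt (fun t => Hmean (Xvar f φ Φ t) (N t) x)
      (-c - 1 / (n : ℝ) * lapl Φ f x) 0 := by
    have h := (HasDerivAt.fun_sum (u := Finset.univ) fun i _ =>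
      HasDerivAt.fun_sum (u := Finset.univ) fun j _ =>
        (hginv i j).mul (hh i j)).const_mul (1 / (n : ℝ))
    convert! h using 1
    have hterm (i j : Fin n) : -(2 * c) * (gmet Φ x)⁻¹ i j * sff (Xvar f φ Φ 0) (N 0) x i j +
        (gmet (Xvar f φ Φ 0) x)⁻¹ i j * (c * gmet Φ x i j - ⟪pd i Φ x, pd j (gradV Φ f) x⟫)
        = -c * ((gmet Φ x)⁻¹ i j * gmet Φ x i j)
          - (gmet Φ x)⁻¹ i j * ⟪pd i Φ x, pd j (gradV Φ f) x⟫ := by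
      rw [hh0, hg0]
      ring
    simp only [hterm, Finset.sum_sub_distrib, ← Finset.mul_sum]
    rw [sum_gmet_inv_mul_gmet_eq_card hdet.ne', ← lapl_eq_trace_pd_gradV (hΦ2 x hx) (hf2 x hx) hdet]
    field_simp
  have hH0 : Hmean (Xvar f φ Φ 0) (N 0) x = 1 := by
    rw [Hmean, hh0, hg0, sum_gmet_inv_mul_gmet_eq_card hdet.ne', one_div_mul_cancel hn0]
  rw [(hH.fun_pow 2).deriv, hH0]
  push_cast
  ring
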